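/- arXiv:1005.3494 — 2 statements merged into one kernel-verified Lean document; each statement's English description precedes it below -/
import Mathlib

section
/- Let $\rho:[0,\infty)\to[0,1]$ be the Dickman function, defined by $\rho(u)=1$ for $0\le u\le 1$ and as the unique continuous solution of $u\rho'(u) = -\rho(u-1)$ for $u \ge 1$. For integers $k \ge 0$ define $I_k(u) = \int_{t_1,\ldots,t_k \ge 1,\ t_1+\cdots+t_k \le u} \frac{dt_1}{t_1}\cdots\frac{dt_k}{t_k}$ (with $I_0(u)=1$). Then for every $u \ge 0$, $\rho(u) = \sum_{k=0}^{\infty} \frac{(-1)^k}{k!} I_k(u)$, the sum being finite since $I_k(u) = 0$ whenever $k \ge u$. -/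
open MeasureTheory

/-- The iterated integral `I_k(u)`. -/
noncomputable def Ik (k : ℕ) (u : ℝ) : ℝ :=
  ∫ t in {t : Fin k → ℝ | (∀ i, 1 ≤ t i) ∧ (∑ i, t i) ≤ u}, ∏ i, (t i)⁻¹

/-!
Multiplying the integrand of `I_{k+1}` by `(t_1 + ⋯ + t_{k+1}) / (t_1 + ⋯ + t_{k+1})` and expanding
the numerator, the `i`-th summand loses the factor `1 / t_i`; taking `w = t_1 + ⋯ + t_{k+1}` as a
variable in place of `t_i` gives `I_{k+1}(u) = (k+1) ∫_1^u I_k(w-1) dw/w`. Hence the alternating sum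
solves the same integral equation `f(u) = 1 - ∫_1^u f(w-1) dw/w` as `ρ`. The right-hand side only
involves `f` on `[0, u-1]`, so the two solutions agree on `[0, n)` for every `n`, by induction.
-/

open Set
open scoped ENNReal Nat

theorem sum_prod_succAbove_eq_sum_mul_prod {R : Type*} [CommSemiring R] {k : ℕ}
    {a b : Fin (k + 1) → R} (hab : ∀ i, a i * b i = 1) :
    ∑ i : Fin (k + 1), ∏ j, b (i.succAbove j) = (∑ i, a i) * ∏ i, b i := by
  rw [Finset.sum_mul]
  refine Finset.sum_congr rfl fun i _ => ?_
  rw [Fin.prod_univ_succAbove _ i, ← mul_assoc, hab, one_mul]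

section Tonelli

variable {α : Type*} [MeasurableSpace α]

theorem lintegral_pi_removeNth_mul_comp_sum [AddCommMonoid α] [MeasurableAdd₂ α] (μ : Measure α)
    [SigmaFinite μ] {k : ℕ} (i : Fin (k + 1)) {g : (Fin k → α) → ℝ≥0∞} (hg : Measurable g)
    {f : α → ℝ≥0∞} (hf : Measurable f) :
    ∫⁻ t, g (i.removeNth t) * f (∑ j, t j) ∂Measure.pi (fun _ => μ) =
      ∫⁻ y, g y * ∫⁻ x, f (x + ∑ j, y j) ∂μ ∂Measure.pi (fun _ => μ) := by
  have hgf : Measurable fun p : α × (Fin k → α) => g p.2 * f (p.1 + ∑ j, p.2 j) := by fun_prop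
  calc
    _ = ∫⁻ p : α × (Fin k → α), g p.2 * f (p.1 + ∑ j, p.2 j)
          ∂μ.prod (Measure.pi fun _ => μ) := by
      rw [← (measurePreserving_piFinSuccAbove (fun _ => μ) i).lintegral_comp_emb
        (MeasurableEquiv.measurableEmbedding _)]
      simp [Fin.sum_univ_succAbove _ i, Fin.removeNth]
    _ = ∫⁻ y, (∫⁻ x, g y * f (x + ∑ j, y j) ∂μ) ∂Measure.pi fun _ => μ :=
      lintegral_prod_symm _ hgf.aemeasurable
    _ = _ := lintegral_congr fun y => lintegral_const_mul _ (by fun_prop)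

theorem lintegral_pi_sum_removeNth_mul_comp_sum [AddCommMonoid α] [MeasurableAdd₂ α]
    (μ : Measure α) [SigmaFinite μ] {k : ℕ} {g : (Fin k → α) → ℝ≥0∞} (hg : Measurable g)
    {f : α → ℝ≥0∞} (hf : Measurable f) :
    ∫⁻ t, (∑ i : Fin (k + 1), g (i.removeNth t)) * f (∑ j, t j) ∂Measure.pi (fun _ => μ) =
      (k + 1) * ∫⁻ y, g y * ∫⁻ x, f (x + ∑ j, y j) ∂μ ∂Measure.pi (fun _ => μ) := by
  have hmeas (i : Fin (k + 1)) :
      Measurable fun t : Fin (k + 1) → α => g (i.removeNth t) * f (∑ j, t j) := by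
    unfold Fin.removeNth
    fun_prop
  simp_rw [Finset.sum_mul]
  rw [lintegral_finsetSum _ fun i _ => hmeas i]
  simp [lintegral_pi_removeNth_mul_comp_sum μ _ hg hf]

theorem lintegral_mul_setLIntegral_comp_add {G : Type*} [MeasurableSpace G] [AddGroup G]
    [MeasurableAdd G] [MeasurableSub₂ G] (μ : Measure G) [SFinite μ] [μ.IsAddRightInvariant]
    (ν : Measure α) [SFinite ν] {A : Set G} (hA : MeasurableSet A) {g : α → ℝ≥0∞}
    (hg : Measurable g) {s : α → G} (hs : Measurable s) {f : G → ℝ≥0∞} (hf : Measurable f) :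
    ∫⁻ y, g y * (∫⁻ x in A, f (x + s y) ∂μ) ∂ν =
      ∫⁻ w, f w * (∫⁻ y in {y | w - s y ∈ A}, g y ∂ν) ∂μ := by
  classical
  let F (y : α) (w : G) : ℝ≥0∞ := g y * A.indicator (fun _ => f w) (w - s y)
  have hF : Measurable (Function.uncurry F) := by
    refine Measurable.mul (by fun_prop) ?_
    exact Measurable.indicator (f := fun p : α × G => f p.2) (by fun_prop)
      ((measurable_snd.sub (hs.comp measurable_fst)) hA)
  calc
    _ = ∫⁻ y, (∫⁻ w, F y w ∂μ) ∂ν := by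
      refine lintegral_congr fun y => ?_
      have hshift : Measurable fun x => f (x + s y) := by fun_prop
      rw [← lintegral_indicator hA, ← lintegral_const_mul _ (hshift.indicator hA),
        ← lintegral_add_right_eq_self (F y) (s y)]
      refine lintegral_congr fun x => ?_
      simp [F, indicator_apply]
    _ = ∫⁻ w, (∫⁻ y, F y w ∂ν) ∂μ := lintegral_lintegral_swap hF.aemeasurable
    _ = _ := by
      refine lintegral_congr fun w => ?_
      have hslice : MeasurableSet {y | w - s y ∈ A} := measurable_const.sub hs hA
      rw [← lintegral_indicator hslice, ← lintegral_const_mul _ (hg.indicator hslice)]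
      refine lintegral_congr fun y => ?_
      simp [F, indicator_apply, mul_comm]

end Tonelli

theorem ae_pi_restrict_mem {ι : Type*} [Fintype ι] {α : ι → Type*} [∀ i, MeasurableSpace (α i)]
    (μ : ∀ i, Measure (α i)) [∀ i, SigmaFinite (μ i)] {s : ∀ i, Set (α i)}
    (hs : ∀ i, MeasurableSet (s i)) :
    ∀ᵐ t ∂Measure.pi fun i => (μ i).restrict (s i), ∀ i, t i ∈ s i :=
  ae_all_iff.mpr fun i => (Measure.quasiMeasurePreserving_eval _ i).ae (ae_restrict_mem (hs i))

theorem measurableSet_sum_le {ι : Type*} [Fintype ι] (u : ℝ) :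
    MeasurableSet {t : ι → ℝ | ∑ i, t i ≤ u} :=
  measurableSet_le (by fun_prop) measurable_const

/-- The integral `I_k(u)` with values in `[0, ∞]`, where Tonelli's theorem needs no integrability.
The constraints `1 ≤ t_i` are built into the measure. -/
noncomputable def lintegralIk (k : ℕ) (u : ℝ) : ℝ≥0∞ :=
  ∫⁻ t in {t : Fin k → ℝ | ∑ i, t i ≤ u}, ∏ i, (ENNReal.ofReal (t i))⁻¹
    ∂Measure.pi fun _ => volume.restrict (Ici 1)

theorem Ik_eq_toReal_lintegralIk (k : ℕ) (u : ℝ) : Ik k u = (lintegralIk k u).toReal := by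
  have hrestrict : volume.restrict {t : Fin k → ℝ | (∀ i, 1 ≤ t i) ∧ ∑ i, t i ≤ u} =
      (Measure.pi fun _ : Fin k => volume.restrict (Ici 1)).restrict {t | ∑ i, t i ≤ u} := by
    rw [← Measure.restrict_pi_pi, Measure.restrict_restrict (measurableSet_sum_le u), ← volume_pi]
    congr 1
    ext t
    simp [Pi.le_def, and_comm]
  have hone := ae_restrict_of_ae (s := {t | ∑ i, t i ≤ u})
    (ae_pi_restrict_mem (fun _ : Fin k => volume) fun _ => measurableSet_Ici (a := (1 : ℝ)))
  rw [Ik, lintegralIk, hrestrict, integral_eq_lintegral_of_nonneg_ae]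
  · congr 1
    refine lintegral_congr_ae (hone.mono fun t ht => ?_)
    have hpos (i) : 0 < t i := one_pos.trans_le (ht i)
    dsimp only
    rw [ENNReal.ofReal_prod_of_nonneg fun i _ => (inv_pos.mpr (hpos i)).le]
    exact Finset.prod_congr rfl fun i _ => ENNReal.ofReal_inv_of_pos (hpos i)
  · exact hone.mono fun t ht =>
      Finset.prod_nonneg fun i _ => inv_nonneg.mpr (zero_le_one.trans (ht i))
  · exact Measurable.aestronglyMeasurable (by fun_prop)

theorem lintegralIk_mono (k : ℕ) : Monotone (lintegralIk k) :=
  fun _ _ huv => lintegral_mono_set fun _ ht => le_trans ht huv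

theorem lintegralIk_succ_eq_lintegral_sum_removeNth (k : ℕ) (u : ℝ) :
    lintegralIk (k + 1) u =
      ∫⁻ t : Fin (k + 1) → ℝ,
        (∑ i : Fin (k + 1), ∏ j, (ENNReal.ofReal (i.removeNth t j))⁻¹) *
        (Icc 1 u).indicator (fun w => (ENNReal.ofReal w)⁻¹) (∑ i, t i)
        ∂Measure.pi fun _ => volume.restrict (Ici 1) := by
  rw [lintegralIk, ← lintegral_indicator (measurableSet_sum_le u)]
  refine lintegral_congr_ae
    ((ae_pi_restrict_mem _ fun _ => measurableSet_Ici).mono fun t ht => ?_)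
  have hpos (i) : 0 < t i := one_pos.trans_le (ht i)
  have hsum : 1 ≤ ∑ i, t i :=
    (ht 0).trans (Finset.single_le_sum (fun i _ => (hpos i).le) (Finset.mem_univ 0))
  have hcancel : ∏ i, (ENNReal.ofReal (t i))⁻¹ =
      (∑ i : Fin (k + 1), ∏ j, (ENNReal.ofReal (i.removeNth t j))⁻¹) *
        (ENNReal.ofReal (∑ i, t i))⁻¹ := by
    have hinv {x : ℝ} (hx : 0 < x) : ENNReal.ofReal x * (ENNReal.ofReal x)⁻¹ = 1 :=
      ENNReal.mul_inv_cancel (ENNReal.ofReal_pos.mpr hx).ne' ENNReal.ofReal_ne_top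
    simp only [Fin.removeNth]
    rw [sum_prod_succAbove_eq_sum_mul_prod fun i => hinv (hpos i),
      ← ENNReal.ofReal_sum_of_nonneg fun i _ => (hpos i).le, mul_right_comm,
      hinv (one_pos.trans_le hsum), one_mul]
  simp [indicator_apply, hsum, hcancel]

theorem lintegralIk_succ (k : ℕ) (u : ℝ) :
    lintegralIk (k + 1) u =
      (k + 1) * ∫⁻ w in Icc 1 u, (ENNReal.ofReal w)⁻¹ * lintegralIk k (w - 1) := by
  have hf : Measurable ((Icc 1 u).indicator fun w => (ENNReal.ofReal w)⁻¹) :=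
    Measurable.indicator (by fun_prop) measurableSet_Icc
  have hg : Measurable fun t : Fin k → ℝ => ∏ i, (ENNReal.ofReal (t i))⁻¹ := by fun_prop
  rw [lintegralIk_succ_eq_lintegral_sum_removeNth,
    lintegral_pi_sum_removeNth_mul_comp_sum _ hg hf,
    lintegral_mul_setLIntegral_comp_add _ _ measurableSet_Ici hg (by fun_prop) hf,
    ← lintegral_indicator measurableSet_Icc]
  simp_rw [indicator_mul_left, lintegralIk, mem_Ici, le_sub_comm]

theorem lintegralIk_lt_top (k : ℕ) (u : ℝ) : lintegralIk k u < ∞ := by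
  induction k generalizing u with
  | zero => simp [lintegralIk]
  | succ k ih =>
    have hle : ∀ w ∈ Icc 1 u, (ENNReal.ofReal w)⁻¹ * lintegralIk k (w - 1) ≤ lintegralIk k u :=
      fun w hw => mul_le_of_le_one_of_le
        (ENNReal.inv_le_one.mpr (ENNReal.one_le_ofReal.mpr hw.1))
        (lintegralIk_mono k (by linarith [hw.2]))
    rw [lintegralIk_succ]
    refine ENNReal.mul_lt_top (by finiteness)
      ((setLIntegral_mono' measurableSet_Icc hle).trans_lt ?_)
    rw [setLIntegral_const]
    exact ENNReal.mul_lt_top (ih u) measure_Icc_lt_top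

theorem Ik_mono (k : ℕ) : Monotone (Ik k) := fun u v huv => by
  rw [Ik_eq_toReal_lintegralIk, Ik_eq_toReal_lintegralIk]
  exact ENNReal.toReal_mono (lintegralIk_lt_top k v).ne (lintegralIk_mono k huv)

theorem Ik_zero {u : ℝ} (hu : 0 ≤ u) : Ik 0 u = 1 := by
  simp [Ik, hu, Measure.volume_pi_eq_dirac (x := default)]

theorem Ik_succ (k : ℕ) (u : ℝ) :
    Ik (k + 1) u = (k + 1) * ∫ w in Icc 1 u, Ik k (w - 1) / w := by
  have hmeas : Measurable fun w => (ENNReal.ofReal w)⁻¹ * lintegralIk k (w - 1) :=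
    Measurable.mul (by fun_prop) ((lintegralIk_mono k).measurable.comp (by fun_prop))
  have hfin : ∀ᵐ w ∂volume.restrict (Icc 1 u),
      (ENNReal.ofReal w)⁻¹ * lintegralIk k (w - 1) < ∞ := by
    filter_upwards [ae_restrict_mem measurableSet_Icc] with w hw
    have hw0 : 0 < w := one_pos.trans_le hw.1
    exact ENNReal.mul_lt_top (by simpa using hw0) (lintegralIk_lt_top k _)
  rw [Ik_eq_toReal_lintegralIk, lintegralIk_succ, ENNReal.toReal_mul,
    ← integral_toReal hmeas.aemeasurable hfin]
  congr 1
  refine setIntegral_congr_fun measurableSet_Icc fun w hw => ?_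
  simp [Ik_eq_toReal_lintegralIk, zero_le_one.trans hw.1, div_eq_inv_mul]

theorem Ik_eq_zero_of_lt {k : ℕ} {u : ℝ} (hu : u < k) : Ik k u = 0 := by
  induction k generalizing u with
  | zero =>
    have : ¬ 0 ≤ u := by simpa using hu
    simp [Ik, this]
  | succ k ih =>
    rw [Ik_succ, setIntegral_eq_zero_of_forall_eq_zero, mul_zero]
    intro w hw
    push_cast at hu
    rw [ih (by linarith [hw.2]), zero_div]

theorem integrableOn_Ik_sub_one_div (k : ℕ) (u : ℝ) :
    IntegrableOn (fun w => Ik k (w - 1) / w) (Icc 1 u) := by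
  simp_rw [div_eq_mul_inv]
  refine IntegrableOn.mul_continuousOn ?_ ?_ isCompact_Icc
  · exact MonotoneOn.integrableOn_isCompact isCompact_Icc
      fun v _ w _ hvw => Ik_mono k (sub_le_sub_right hvw 1)
  · exact continuousOn_inv₀.mono fun w hw => (one_pos.trans_le hw.1).ne'

theorem sum_range_succ_Ik (n : ℕ) {u : ℝ} (hu : 0 ≤ u) :
    ∑ k ∈ Finset.range (n + 1), (-1) ^ k / (k ! : ℝ) * Ik k u =
      1 - ∫ w in Icc 1 u, (∑ k ∈ Finset.range n, (-1) ^ k / (k ! : ℝ) * Ik k (w - 1)) / w := by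
  have hterm (k : ℕ) : (-1) ^ (k + 1) / ((k + 1)! : ℝ) * Ik (k + 1) u =
      -∫ w in Icc 1 u, (-1) ^ k / (k ! : ℝ) * (Ik k (w - 1) / w) := by
    rw [Ik_succ, integral_const_mul, Nat.factorial_succ]
    push_cast
    field_simp
    ring
  simp_rw [Finset.sum_range_succ', hterm, Ik_zero hu, Finset.sum_div, mul_div_assoc]
  rw [integral_finsetSum _ fun k _ => (integrableOn_Ik_sub_one_div k u).const_mul _,
    Finset.sum_neg_distrib]
  simp only [pow_zero, Nat.factorial_zero, Nat.cast_one, div_one, mul_one]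
  ring

theorem eq_one_sub_integral_of_hasDerivAt {ρ : ℝ → ℝ} (hcont : ContinuousOn ρ (Ici 0))
    (hone : ∀ u ∈ Icc (0 : ℝ) 1, ρ u = 1)
    (hderiv : ∀ u : ℝ, 1 < u → HasDerivAt ρ (-ρ (u - 1) / u) u) {u : ℝ} (hu : 0 ≤ u) :
    ρ u = 1 - ∫ w in Icc 1 u, ρ (w - 1) / w := by
  rcases lt_or_ge u 1 with h | h
  · simp [hone u ⟨hu, h.le⟩, Icc_eq_empty_of_lt h]
  have hderiv_cont : ContinuousOn (fun w => -ρ (w - 1) / w) (Icc 1 u) :=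
    (hcont.comp (by fun_prop) fun w hw => sub_nonneg.mpr hw.1).neg.div continuousOn_id
      fun w hw => (one_pos.trans_le hw.1).ne'
  have hftc : ∫ w in 1..u, -ρ (w - 1) / w = ρ u - ρ 1 :=
    intervalIntegral.integral_eq_sub_of_hasDerivAt_of_le h
      (hcont.mono fun w hw => zero_le_one.trans hw.1) (fun w hw => hderiv w hw.1)
      (hderiv_cont.intervalIntegrable_of_Icc h)
  simp_rw [neg_div, intervalIntegral.integral_neg] at hftc
  rw [integral_Icc_eq_integral_Ioc, ← intervalIntegral.integral_of_le h]
  linarith [hone 1 ⟨zero_le_one, le_rfl⟩]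

theorem eq_sum_range_Ik_of_lt {ρ : ℝ → ℝ}
    (hρ : ∀ u : ℝ, 0 ≤ u → ρ u = 1 - ∫ w in Icc 1 u, ρ (w - 1) / w) {n : ℕ} {u : ℝ} (hu : 0 ≤ u)
    (hun : u < n) : ρ u = ∑ k ∈ Finset.range n, (-1) ^ k / (k ! : ℝ) * Ik k u := by
  induction n generalizing u with
  | zero => exact absurd hun (by simpa using hu)
  | succ n ih =>
    push_cast at hun
    rw [hρ u hu, sum_range_succ_Ik n hu]
    congr 1
    refine setIntegral_congr_fun measurableSet_Icc fun w hw => ?_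
    simp only [ih (sub_nonneg.mpr hw.1) (by linarith [hw.2] : w - 1 < n)]

/-- if `ρ` is the Dickman function (continuous on `[0,∞)`, equal to `1` on
`[0,1]`, and satisfying `u ρ'(u) = -ρ(u-1)` for `u > 1`), then for every `u ≥ 0`,
`ρ(u) = ∑_{k=0}^∞ ((-1)^k/k!) I_k(u)`; the sum is in fact finite since `I_k(u) = 0`
whenever `k ≥ u` (here stated for `u < k`). -/
theorem dickman_eq_sum_Ik (ρ : ℝ → ℝ)
    (hcont : ContinuousOn ρ (Set.Ici 0))
    (hone : ∀ u ∈ Set.Icc (0 : ℝ) 1, ρ u = 1)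
    (hderiv : ∀ u : ℝ, 1 < u → HasDerivAt ρ (-ρ (u - 1) / u) u) :
    ∀ u : ℝ, 0 ≤ u →
      HasSum (fun k : ℕ => (-1) ^ k / (Nat.factorial k : ℝ) * Ik k u) (ρ u) ∧
        ∀ k : ℕ, u < k → Ik k u = 0 := by
  intro u hu
  refine ⟨?_, fun k => Ik_eq_zero_of_lt⟩
  obtain ⟨n, hun⟩ := exists_nat_gt u
  have hρ (v : ℝ) (hv : 0 ≤ v) := eq_one_sub_integral_of_hasDerivAt hcont hone hderiv hv
  rw [eq_sum_range_Ik_of_lt hρ hu hun]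
  refine hasSum_sum_of_ne_finset_zero fun k hk => ?_
  have hnk : (n : ℝ) ≤ k := by simpa using hk
  rw [Ik_eq_zero_of_lt (hun.trans_le hnk), mul_zero]
end

section
/- For any complex number $z$ with $\mathrm{Re}(z) < 2$ and any $c > 0$, $\frac{1}{2\pi i}\int_{c-i\infty}^{c+i\infty} e^s\,\frac{s^z}{s^2}\,ds = \frac{1}{\Gamma(2-z)}$, where $s^z = e^{z\log s}$ with the principal branch of the logarithm on $\mathrm{Re}(s) > 0$. -/
open MeasureTheory Filter Topology

/-! For `1 < re a`, the integral of `exp s * s ^ (-a)` over `re s = c` converges absolutely. There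
`Γ(a) s ^ (-a)` is the Laplace transform of `x ^ (a - 1)`, as analytic continuation from `0 < s`
shows, so Fourier inversion at `x = 1` evaluates the integral to `2πi / Γ(a)`.

For `w = 2 - z` we only know `0 < re w`, and the integral need not converge absolutely. Integrating
by parts over `[-T, T]` replaces `s ^ (-w)` by `w s ^ (-(w + 1))`, with boundary terms vanishing as
`T → ∞`, and `Γ(w + 1) = w Γ(w)` removes the factor `w`. -/

section LaplaceTransform

open Complex Set
open scoped Real FourierTransform

variable {E : Type*} [NormedAddCommGroup E] [NormedSpace ℂ E] {f : ℝ → E} {s s' : ℂ}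

/-- Absolute convergence at `s` of the integral defining the one-sided Laplace transform of `f`. -/
def LaplaceConvergent (f : ℝ → E) (s : ℂ) : Prop :=
  IntegrableOn (fun x : ℝ ↦ exp (-(s * x)) • f x) (Ioi 0)

/-- The one-sided Laplace transform of `f`, with the junk value `0` where the integral does not
converge absolutely. Values of `f` outside `(0, ∞)` are ignored. -/
noncomputable def laplaceTransform (f : ℝ → E) (s : ℂ) : E :=
  ∫ x in Ioi (0 : ℝ), exp (-(s * x)) • f x

theorem LaplaceConvergent.mono (hf : LaplaceConvergent f s) (hs : s.re ≤ s'.re) :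
    LaplaceConvergent f s' := by
  have hbound : ∀ᵐ x : ℝ ∂volume.restrict (Ioi 0), ‖exp (-((s' - s) * x))‖ ≤ 1 := by
    filter_upwards [ae_restrict_mem measurableSet_Ioi] with x (hx : 0 < x)
    simpa [norm_exp] using mul_nonneg (sub_nonneg.2 hs) hx.le
  refine (Integrable.bdd_smul hf 1 (by fun_prop) hbound).congr (ae_of_all _ fun x ↦ ?_)
  simp only [Pi.smul_apply', smul_smul, ← Complex.exp_add]
  ring_nf

theorem norm_mul_exp_neg_le {δ x : ℝ} (hδ : 0 < δ) (hx : 0 ≤ x) (hs : δ ≤ s.re) :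
    ‖(x : ℂ) * exp (-(s * x))‖ ≤ δ⁻¹ := by
  have hexp : δ * x ≤ Real.exp (δ * x) := by linarith [Real.add_one_le_exp (δ * x)]
  calc ‖(x : ℂ) * exp (-(s * x))‖ = x * Real.exp (-(s.re * x)) := by
        simp [norm_exp, abs_of_nonneg hx]
    _ ≤ x * Real.exp (-(δ * x)) := by gcongr
    _ ≤ δ⁻¹ := by
        rw [Real.exp_neg, ← div_eq_mul_inv, div_le_iff₀ (Real.exp_pos _), le_inv_mul_iff₀ hδ]
        exact hexp

theorem LaplaceConvergent.differentiableAt_laplaceTransform (hf : LaplaceConvergent f s)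
    (hs : s.re < s'.re) : DifferentiableAt ℂ (laplaceTransform f) s' := by
  obtain ⟨δ, hδ, hδs⟩ : ∃ δ > 0, s.re + δ < s'.re :=
    ⟨(s'.re - s.re) / 2, by linarith, by linarith⟩
  have hnhds : {r : ℂ | s.re + δ < r.re} ∈ 𝓝 s' :=
    (isOpen_lt continuous_const continuous_re).mem_nhds hδs
  have hconv {r : ℂ} (hr : s.re + δ < r.re) : LaplaceConvergent f r := hf.mono (by linarith)
  refine (hasDerivAt_integral_of_dominated_loc_of_deriv_le
    (F' := fun r (x : ℝ) ↦ (-x * exp (-(r * x))) • f x)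
    (bound := fun x : ℝ ↦ δ⁻¹ * ‖exp (-(s * x)) • f x‖) hnhds
    (eventually_of_mem hnhds fun r hr ↦ (hconv hr).aestronglyMeasurable) (hconv hδs)
    ?_ ?_ (hf.norm.const_mul _) ?_).2.differentiableAt
  · simp_rw [mul_smul]
    exact AEStronglyMeasurable.smul (by fun_prop) (hconv hδs).aestronglyMeasurable
  · filter_upwards [ae_restrict_mem measurableSet_Ioi] with x (hx : 0 < x) r hr
    -- The spare decay `exp (-(δ * x))` absorbs the factor `x` produced by differentiating.
    have hsplit : (-x * exp (-(r * x))) • f x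
        = -((x * exp (-((r - s) * x))) • exp (-(s * x)) • f x) := by
      rw [smul_smul, mul_assoc, ← Complex.exp_add, ← neg_smul]
      ring_nf
    rw [hsplit, norm_neg, norm_smul]
    gcongr
    exact norm_mul_exp_neg_le hδ hx.le (by simpa using (lt_sub_iff_add_lt'.2 hr).le)
  · refine ae_of_all _ fun x r _ ↦ HasDerivAt.smul_const ?_ _
    simpa [mul_comm] using ((hasDerivAt_id r).mul_const (x : ℂ)).neg.cexp

theorem fourier_indicator_exp_smul (f : ℝ → E) (c ξ : ℝ) :
    𝓕 ((Ioi 0).indicator fun x : ℝ ↦ exp (-(c * x)) • f x) ξ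
      = laplaceTransform f (c + (2 * π * ξ : ℝ) * I) := by
  rw [Real.fourier_real_eq_integral_exp_smul, laplaceTransform, ← integral_indicator
    measurableSet_Ioi]
  congr 1 with x
  by_cases hx : x ∈ Ioi (0 : ℝ)
  · rw [indicator_of_mem hx, indicator_of_mem hx, smul_smul, ← Complex.exp_add]
    push_cast
    ring_nf
  · rw [indicator_of_notMem hx, indicator_of_notMem hx, smul_zero]

theorem integral_exp_smul_laplaceTransform [CompleteSpace E] {c x : ℝ} (hx : 0 < x)
    (hf : LaplaceConvergent f c) (hF : VerticalIntegrable (laplaceTransform f) c)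
    (hfx : ContinuousAt f x) :
    ∫ y : ℝ, exp ((c + y * I) * x) • laplaceTransform f (c + y * I) = (2 * π) • f x := by
  let g : ℝ → E := (Ioi 0).indicator fun u : ℝ ↦ exp (-(c * u)) • f u
  have hFg : 𝓕 g = fun ξ : ℝ ↦ laplaceTransform f (c + (2 * π * ξ : ℝ) * I) :=
    funext (fourier_indicator_exp_smul f c)
  have hgx : ContinuousAt g x := by
    have h : ContinuousAt (fun u : ℝ ↦ exp (-(c * u)) • f u) x := by fun_prop
    exact h.congr ((eqOn_indicator.eventuallyEq_of_mem (Ioi_mem_nhds hx)).symm)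
  have hinv : 𝓕⁻ (𝓕 g) x = exp (-(c * x)) • f x := by
    rw [((integrable_indicator_iff measurableSet_Ioi).2 hf).fourierInv_fourier_eq
      (hFg ▸ hF.comp_mul_left' Real.two_pi_pos.ne') hgx]
    exact indicator_of_mem (mem_Ioi.2 hx) _
  calc ∫ y : ℝ, exp ((c + y * I) * x) • laplaceTransform f (c + y * I)
      = (2 * π) • ∫ ξ : ℝ, exp ((c + (2 * π * ξ : ℝ) * I) * x) •
          laplaceTransform f (c + (2 * π * ξ : ℝ) * I) := by
        rw [Measure.integral_comp_mul_left
          (fun y : ℝ ↦ exp ((c + y * I) * x) • laplaceTransform f (c + y * I)),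
          abs_of_pos (by positivity), smul_inv_smul₀ Real.two_pi_pos.ne']
    _ = (2 * π) • exp (c * x) • 𝓕⁻ (𝓕 g) x := by
        rw [Real.fourierInv_eq', hFg, ← integral_smul (exp (c * x))]
        congr 2 with ξ
        simp only [RCLike.inner_apply, conj_trivial]
        rw [smul_smul, ← Complex.exp_add]
        push_cast
        ring_nf
    _ = (2 * π) • f x := by
        rw [hinv, smul_smul, ← Complex.exp_add, add_neg_cancel, Complex.exp_zero, one_smul]

end LaplaceTransform

section LaplacePower

open Complex Set
open scoped Real

variable {a s : ℂ}

theorem laplaceTransform_cpow_ofReal (ha : 0 < a.re) {r : ℝ} (hr : 0 < r) :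
    laplaceTransform (fun x : ℝ ↦ (x : ℂ) ^ (a - 1)) r = Gamma a * (r : ℂ) ^ (-a) := by
  have harg : arg (r : ℂ) ≠ π := by
    rw [arg_ofReal_of_nonneg hr.le]
    exact Real.pi_pos.ne
  simp_rw [laplaceTransform, smul_eq_mul, mul_comm (exp _)]
  rw [integral_cpow_mul_exp_neg_mul_Ioi ha hr, one_div, inv_cpow _ _ harg, cpow_neg, mul_comm]

theorem laplaceConvergent_cpow (ha : 0 < a.re) (hs : 0 < s.re) :
    LaplaceConvergent (fun x : ℝ ↦ (x : ℂ) ^ (a - 1)) s := by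
  have hne : laplaceTransform (fun x : ℝ ↦ (x : ℂ) ^ (a - 1)) s.re ≠ 0 := by
    rw [laplaceTransform_cpow_ofReal ha hs]
    exact mul_ne_zero (Gamma_ne_zero_of_re_pos ha) (by simp [cpow_eq_zero_iff, hs.ne'])
  exact LaplaceConvergent.mono (Integrable.of_integral_ne_zero hne) (ofReal_re _).le

theorem laplaceTransform_cpow (ha : 0 < a.re) (hs : 0 < s.re) :
    laplaceTransform (fun x : ℝ ↦ (x : ℂ) ^ (a - 1)) s = Gamma a * s ^ (-a) := by
  have hopen : IsOpen {r : ℂ | 0 < r.re} := isOpen_lt continuous_const continuous_re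
  have hleft : AnalyticOnNhd ℂ (laplaceTransform fun x : ℝ ↦ (x : ℂ) ^ (a - 1))
      {r : ℂ | 0 < r.re} := by
    refine DifferentiableOn.analyticOnNhd (fun r (hr : 0 < r.re) ↦ ?_) hopen
    have hconv : LaplaceConvergent (fun x : ℝ ↦ (x : ℂ) ^ (a - 1)) (r / 2) :=
      laplaceConvergent_cpow ha (by simpa using hr)
    exact (hconv.differentiableAt_laplaceTransform (by simpa using hr)).differentiableWithinAt
  have hright : AnalyticOnNhd ℂ (fun r ↦ Gamma a * r ^ (-a)) {r : ℂ | 0 < r.re} := by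
    refine DifferentiableOn.analyticOnNhd (fun r hr ↦ ?_) hopen
    exact ((differentiableAt_id.cpow_const (Or.inl hr)).const_mul _).differentiableWithinAt
  have hreal : Tendsto ((↑) : ℝ → ℂ) (𝓝[≠] 1) (𝓝[≠] 1) := by
    rw [← ofReal_one]
    exact continuous_ofReal.continuousWithinAt.tendsto_nhdsWithin
      fun r hr ↦ ofReal_injective.ne hr
  have hfreq : ∃ᶠ r in 𝓝[≠] (1 : ℂ),
      laplaceTransform (fun x : ℝ ↦ (x : ℂ) ^ (a - 1)) r = Gamma a * r ^ (-a) := by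
    refine hreal.frequently (Eventually.frequently ?_)
    filter_upwards [nhdsWithin_le_nhds (lt_mem_nhds one_pos)] with r hr
    exact laplaceTransform_cpow_ofReal ha hr
  exact hleft.eqOn_of_preconnected_of_frequently_eq hright
    (convex_halfSpace_re_gt 0).isPreconnected (by simp) hfreq hs

end LaplacePower

section VerticalLine

open Complex Set Bornology
open scoped Real

variable {a w : ℂ} {c : ℝ}

theorem norm_cpow_le_mul_exp_pi (s w : ℂ) : ‖s ^ w‖ ≤ ‖s‖ ^ w.re * Real.exp (π * |w.im|) := by
  have harg : -(arg s * w.im) ≤ π * |w.im| :=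
    calc -(arg s * w.im) ≤ |arg s| * |w.im| := abs_mul (arg s) _ ▸ neg_le_abs _
      _ ≤ π * |w.im| := by gcongr; exact abs_arg_le_pi s
  refine (norm_cpow_le s w).trans ?_
  rw [div_eq_mul_inv, ← Real.exp_neg]
  gcongr

theorem tendsto_cpow_neg_cobounded (hw : 0 < w.re) :
    Tendsto (fun s : ℂ ↦ s ^ (-w)) (cobounded ℂ) (𝓝 0) := by
  refine squeeze_zero_norm (fun s ↦ norm_cpow_le_mul_exp_pi s (-w)) ?_
  simpa using ((tendsto_rpow_neg_atTop hw).comp tendsto_norm_cobounded_atTop).mul_const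
    (Real.exp (π * |(-w).im|))

theorem tendsto_ofReal_add_mul_I_cobounded (c : ℝ) :
    Tendsto (fun t : ℝ ↦ (c : ℂ) + t * I) (cobounded ℝ) (cobounded ℂ) := by
  rw [← tendsto_norm_atTop_iff_cobounded]
  refine tendsto_atTop_mono (fun t ↦ ?_) tendsto_norm_cobounded_atTop
  simpa using abs_im_le_norm ((c : ℂ) + t * I)

theorem norm_ofReal_add_mul_I_eq (hc : c ≠ 0) (t : ℝ) :
    ‖(c : ℂ) + t * I‖ = |c| * √(1 + ‖c⁻¹ * t‖ ^ 2) := by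
  rw [norm_add_mul_I, ← Real.sqrt_sq_eq_abs, ← Real.sqrt_mul (sq_nonneg c), Real.norm_eq_abs,
    sq_abs]
  field_simp

theorem verticalIntegrable_cpow_neg (ha : 1 < a.re) (hc : c ≠ 0) :
    VerticalIntegrable (fun s ↦ s ^ (-a)) c := by
  have hjapanese : Integrable fun t : ℝ ↦ (1 + ‖c⁻¹ * t‖ ^ 2) ^ (-a.re / 2) :=
    (integrable_rpow_neg_one_add_norm_sq (by simpa using ha)).comp_mul_left' (inv_ne_zero hc)
  have hnorm (t : ℝ) :
      ‖(c : ℂ) + t * I‖ ^ (-a).re = |c| ^ (-a.re) * (1 + ‖c⁻¹ * t‖ ^ 2) ^ (-a.re / 2) := by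
    rw [norm_ofReal_add_mul_I_eq hc, Real.mul_rpow (abs_nonneg c) (Real.sqrt_nonneg _),
      Real.sqrt_eq_rpow, ← Real.rpow_mul (by positivity), neg_re]
    ring_nf
  refine ((hjapanese.const_mul (|c| ^ (-a.re))).mul_const (Real.exp (π * |(-a).im|))).mono'
    ((by fun_prop : Measurable _).pow_const _).aestronglyMeasurable (ae_of_all _ fun t ↦ ?_)
  exact hnorm t ▸ norm_cpow_le_mul_exp_pi _ _

theorem integral_exp_mul_cpow_neg (ha : 1 < a.re) (hc : 0 < c) {x : ℝ} (hx : 0 < x) :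
    ∫ t : ℝ, exp ((c + t * I) * x) * ((c : ℂ) + t * I) ^ (-a)
      = 2 * π * (x : ℂ) ^ (a - 1) / Gamma a := by
  have ha0 : 0 < a.re := one_pos.trans ha
  have hline (t : ℝ) : laplaceTransform (fun u : ℝ ↦ (u : ℂ) ^ (a - 1)) (c + t * I)
      = Gamma a * ((c : ℂ) + t * I) ^ (-a) := laplaceTransform_cpow ha0 (by simpa using hc)
  have hvert : VerticalIntegrable (laplaceTransform fun u : ℝ ↦ (u : ℂ) ^ (a - 1)) c := by
    simpa only [VerticalIntegrable, hline] using
      (verticalIntegrable_cpow_neg ha hc.ne').const_mul (Gamma a)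
  have hinv := integral_exp_smul_laplaceTransform hx (laplaceConvergent_cpow ha0 (by simpa)) hvert
    (continuousAt_ofReal_cpow_const x (a - 1) (Or.inr hx.ne'))
  simp_rw [hline, smul_eq_mul, mul_left_comm _ (Gamma a), integral_const_mul, real_smul] at hinv
  rw [eq_div_iff (Gamma_ne_zero_of_re_pos ha0), mul_comm, hinv]
  push_cast
  rfl

theorem hasDerivAt_ofReal_add_mul_I (c t : ℝ) :
    HasDerivAt (fun t : ℝ ↦ (c : ℂ) + t * I) I t := by
  simpa using ((hasDerivAt_id t).ofReal_comp.mul_const I).const_add (c : ℂ)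

theorem tendsto_intervalIntegral_exp_mul_of_hasDerivAt {F F' : ℂ → ℂ}
    (hderiv : ∀ t : ℝ, HasDerivAt F (F' (c + t * I)) (c + t * I))
    (hF : Tendsto (fun t : ℝ ↦ F (c + t * I)) (cobounded ℝ) (𝓝 0))
    (hF' : VerticalIntegrable F' c) :
    Tendsto (fun T : ℝ ↦ ∫ t in (-T)..T, exp (c + t * I) * F (c + t * I) * I) atTop
      (𝓝 (-∫ t : ℝ, exp (c + t * I) * F' (c + t * I) * I)) := by
  have hnorm (t : ℝ) : ‖exp (c + t * I)‖ = Real.exp c := by simp [norm_exp]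
  have hparts (T : ℝ) : ∫ t in (-T)..T, exp (c + t * I) * F (c + t * I) * I =
      exp (c + T * I) * F (c + T * I) - exp (c + (-T : ℝ) * I) * F (c + (-T : ℝ) * I)
        - ∫ t in (-T)..T, exp (c + t * I) * F' (c + t * I) * I := by
    have h := intervalIntegral.integral_mul_deriv_eq_deriv_mul (a := -T) (b := T)
      (fun t _ ↦ (hderiv t).comp t (hasDerivAt_ofReal_add_mul_I c t))
      (fun t _ ↦ (hasDerivAt_ofReal_add_mul_I c t).cexp)
      (hF'.mul_const I).intervalIntegrable (Continuous.intervalIntegrable (by fun_prop) _ _)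
    simpa only [Function.comp_apply, mul_comm, mul_left_comm, mul_assoc] using h
  have hboundary :
      Tendsto (fun t : ℝ ↦ exp (c + t * I) * F (c + t * I)) (cobounded ℝ) (𝓝 0) := by
    refine squeeze_zero_norm (fun t ↦ ?_) (by simpa using hF.norm.const_mul (Real.exp c))
    rw [norm_mul, hnorm]
  have hint : Integrable fun t : ℝ ↦ exp (c + t * I) * F' (c + t * I) * I :=
    (hF'.bdd_mul (by fun_prop) (ae_of_all _ fun t ↦ (hnorm t).le)).mul_const I
  simp_rw [hparts]
  simpa using ((hboundary.comp (tendsto_id.mono_right IsOrderBornology.atTop_le_cobounded)).sub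
    (hboundary.comp (tendsto_neg_atTop_atBot.mono_right
      IsOrderBornology.atBot_le_cobounded))).sub
    (intervalIntegral_tendsto_integral hint tendsto_neg_atTop_atBot tendsto_id)

theorem tendsto_intervalIntegral_exp_mul_cpow_neg (hw : 0 < w.re) (hc : 0 < c) :
    Tendsto (fun T : ℝ ↦ ∫ t in (-T)..T, exp (c + t * I) * ((c : ℂ) + t * I) ^ (-w) * I) atTop
      (𝓝 (2 * π * I / Gamma w)) := by
  have hw0 : w ≠ 0 := by
    rintro rfl
    simp at hw
  have hw1 : 1 < (w + 1).re := by simpa using hw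
  have hderiv (t : ℝ) : HasDerivAt (fun s : ℂ ↦ s ^ (-w))
      (-w * ((c : ℂ) + t * I) ^ (-(w + 1))) (c + t * I) := by
    rw [neg_add']
    simpa using (hasDerivAt_id ((c : ℂ) + t * I)).cpow_const (c := -w) (Or.inl (by simpa using hc))
  have hvert : VerticalIntegrable (fun s ↦ -w * s ^ (-(w + 1))) c :=
    (verticalIntegrable_cpow_neg hw1 hc.ne').const_mul (-w)
  have hvalue : -∫ t : ℝ, exp (c + t * I) * (-w * ((c : ℂ) + t * I) ^ (-(w + 1))) * I
      = 2 * π * I / Gamma w := by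
    have h := integral_exp_mul_cpow_neg hw1 hc one_pos
    simp only [ofReal_one, mul_one, one_cpow] at h
    simp_rw [mul_left_comm _ (-w), integral_mul_const, integral_const_mul, h,
      Gamma_add_one w hw0]
    have hGamma : Gamma w ≠ 0 := Gamma_ne_zero_of_re_pos hw
    field_simp
  have hdecay : Tendsto (fun t : ℝ ↦ ((c : ℂ) + t * I) ^ (-w)) (cobounded ℝ) (𝓝 0) :=
    (tendsto_cpow_neg_cobounded hw).comp (tendsto_ofReal_add_mul_I_cobounded c)
  simpa only [hvalue] using tendsto_intervalIntegral_exp_mul_of_hasDerivAt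
    (F := fun s ↦ s ^ (-w)) (F' := fun s ↦ -w * s ^ (-(w + 1))) hderiv hdecay hvert

end VerticalLine

/-- for `Re z < 2` and `c > 0`,
`(1/(2πi)) ∫_{c-i∞}^{c+i∞} e^s s^z/s² ds = 1/Γ(2-z)` (symmetric limit; `s^z` is the
principal branch on `Re s > 0`). -/
theorem hankel_vertical_line (z : ℂ) (hz : z.re < 2) (c : ℝ) (hc : 0 < c) :
    Tendsto (fun T : ℝ =>
        (1 / (2 * Real.pi * Complex.I)) *
          ∫ t in (-T)..T,
            Complex.exp ((c : ℂ) + t * Complex.I) *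
              (((c : ℂ) + t * Complex.I) ^ z / ((c : ℂ) + t * Complex.I) ^ 2) * Complex.I)
      atTop (𝓝 (1 / Complex.Gamma (2 - z))) := by
  have hw : 0 < (2 - z).re := by simpa using hz
  have hpow (t : ℝ) : ((c : ℂ) + t * Complex.I) ^ z / ((c : ℂ) + t * Complex.I) ^ 2
      = ((c : ℂ) + t * Complex.I) ^ (-(2 - z)) := by
    have hne : (c : ℂ) + t * Complex.I ≠ 0 := Complex.slitPlane_ne_zero (Or.inl (by simpa using hc))
    rw [neg_sub, Complex.cpow_sub _ _ hne, Complex.cpow_ofNat]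
  have hvalue : 1 / Complex.Gamma (2 - z)
      = 1 / (2 * Real.pi * Complex.I) * (2 * Real.pi * Complex.I / Complex.Gamma (2 - z)) := by
    rw [← mul_div_assoc, one_div_mul_cancel Complex.two_pi_I_ne_zero]
  simp_rw [hpow, hvalue]
  exact (tendsto_intervalIntegral_exp_mul_cpow_neg hw hc).const_mul _
end
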